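/- arXiv:2510.15858 — 2 statements merged into one kernel-verified Lean document; each statement's English description precedes it below -/
import Mathlib

section
/- π is transcendental over ℚ; consequently π does not belong to any subfield K of ℝ that is finite-dimensional over ℚ, and in particular π lies in no quadratic tower. Hence squaring the circle by ruler and compass is impossible. -/
noncomputable section

/-- A quadratic tower: a finite chain `K 0 ⊆ K 1 ⊆ ⋯ ⊆ K n` of subfields of `ℝ`
(viewed as intermediate fields of `ℚ ⊆ ℝ`), with `K 0` the prime subfield
(the copy of `ℚ` in `ℝ`) and each relative degree `[K (i+1) : K i] = 2`. -/
structure QuadraticTower (n : ℕ) where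
  K : Fin (n + 1) → IntermediateField ℚ ℝ
  bot : K 0 = ⊥
  le : ∀ i : Fin n, K i.castSucc ≤ K i.succ
  deg : ∀ i : Fin n,
    Module.finrank (K i.castSucc) (IntermediateField.extendScalars (le i)) = 2

open Polynomial in
theorem aux_isIntegral {A : Type*} [Field A] (a : ℤ) (r : A) (h : IsIntegral ℤ (a • r))
    (g : ℤ[X]) (d : ℕ) (hd : g.natDegree ≤ d) : IsIntegral ℤ ((a : A) ^ d * aeval r g) := by
  rw [aeval_eq_sum_range' (Nat.lt_succ_of_le hd), Finset.mul_sum]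
  refine IsIntegral.sum _ fun i hi => ?_
  have hi' : i ≤ d := by simpa [Nat.lt_succ_iff] using hi
  have e : (a : A) ^ d * g.coeff i • r ^ i
      = ((g.coeff i * a ^ (d - i) : ℤ) : A) * (a • r) ^ i := by
    rw [zsmul_eq_mul, zsmul_eq_mul, mul_pow, ← Nat.sub_add_cancel hi', pow_add,
      Nat.add_sub_cancel]
    push_cast
    ring
  rw [e]
  exact (isIntegral_algebraMap (R := ℤ) (A := A)).mul (h.pow i)

open Polynomial in
theorem aux_int {A : Type*} [Field A] [Algebra ℚ A] [IsGalois ℚ A] [DecidableEq A]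
    (S : Finset A) (hS : ∀ σ : A ≃ₐ[ℚ] A, ∀ s ∈ S, σ s ∈ S) (a : ℤ)
    (ha : ∀ T ∈ S.powerset, IsIntegral ℤ (a • ∑ s ∈ T, s))
    (g : ℤ[X]) (d : ℕ) (hd : g.natDegree ≤ d) :
    ∃ k : ℤ, (k : A) = (a : A) ^ d *
      ∑ T ∈ S.powerset with ∑ s ∈ T, s ≠ 0, aeval (∑ s ∈ T, s) g := by
  set x := (a : A) ^ d * ∑ T ∈ S.powerset with ∑ s ∈ T, s ≠ 0, aeval (∑ s ∈ T, s) g with hx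
  have hint : IsIntegral ℤ x := by
    rw [hx, Finset.mul_sum]
    refine IsIntegral.sum _ fun T hT => ?_
    exact aux_isIntegral a _ (ha T (Finset.mem_filter.1 hT).1) g d hd
  have hfix : x ∈ Set.range (algebraMap ℚ A) := by
    rw [InfiniteGalois.mem_range_algebraMap_iff_fixed]
    intro σ
    have key : ∀ (τ : A ≃ₐ[ℚ] A) (T : Finset A), ∑ s ∈ T.image τ, s = τ (∑ s ∈ T, s) := by
      intro τ T
      rw [Finset.sum_image (fun _ _ _ _ h => τ.injective h), map_sum]
    have mem : ∀ (τ : A ≃ₐ[ℚ] A), ∀ T ∈ S.powerset.filter (fun T => ∑ s ∈ T, s ≠ 0),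
        T.image τ ∈ S.powerset.filter (fun T => ∑ s ∈ T, s ≠ 0) := by
      intro τ T hT
      simp only [Finset.mem_filter, Finset.mem_powerset] at hT ⊢
      refine ⟨?_, ?_⟩
      · intro y hy
        obtain ⟨s, hs, rfl⟩ := Finset.mem_image.1 hy
        exact hS τ s (hT.1 hs)
      · rw [key]
        exact (map_ne_zero τ).2 hT.2
    rw [hx, map_mul, map_pow, map_intCast, map_sum]
    congr 1
    refine Finset.sum_bij' (fun T _ => T.image σ) (fun T _ => T.image σ.symm)
      (mem σ) (mem σ.symm) ?_ ?_ ?_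
    · intro T _; simp [Finset.image_image, Function.comp_def]
    · intro T _; simp [Finset.image_image, Function.comp_def]
    · intro T _
      rw [key]
      exact (Polynomial.aeval_algHom_apply ((σ : A →ₐ[ℚ] A).restrictScalars ℤ) _ g).symm
  obtain ⟨q, hq⟩ := hfix
  rw [← hq] at hint
  have hq' : IsIntegral ℤ q :=
    (isIntegral_algHom_iff ((Algebra.ofId ℚ A).restrictScalars ℤ) (algebraMap ℚ A).injective).1 hint
  obtain ⟨k, hk⟩ := IsIntegrallyClosed.isIntegral_iff.1 hq'
  refine ⟨k, ?_⟩
  rw [← hq, ← hk]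
  simp

open Polynomial in
theorem aux_core {A : Type*} [Field A] [Algebra ℚ A] [IsGalois ℚ A] [DecidableEq A]
    (φ : A →+* ℂ) (S : Finset A) (hS : ∀ σ : A ≃ₐ[ℚ] A, ∀ s ∈ S, σ s ∈ S)
    (h : ∏ s ∈ S, (1 + Complex.exp (φ s)) = 0) : False := by
  have : CharZero A := algebraRat.charZero A
  have halg : ∀ x : A, IsAlgebraic ℤ x := fun x =>
    (IsFractionRing.isAlgebraic_iff ℤ ℚ A).2 (Algebra.IsAlgebraic.isAlgebraic x)
  set M := S.powerset.filter (fun T => ∑ s ∈ T, s ≠ 0) with hM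
  set N : ℕ := (S.powerset.filter (fun T => ¬ ∑ s ∈ T, s ≠ 0)).card with hN
  have hNpos : 0 < N := by
    rw [hN, Finset.card_pos]
    exact ⟨∅, by simp⟩
  -- the exponential identity
  have hexp : (∑ T ∈ M, Complex.exp (φ (∑ s ∈ T, s))) + (N : ℂ) = 0 := by
    rw [Finset.prod_one_add] at h
    rw [← h, ← Finset.sum_filter_add_sum_filter_not S.powerset (fun T => ∑ s ∈ T, s ≠ 0)]
    congr 1
    · refine Finset.sum_congr rfl fun T _ => ?_
      rw [map_sum, Complex.exp_sum]
    · rw [hN, Finset.card_eq_sum_ones]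
      push_cast
      refine Finset.sum_congr rfl fun T hT => ?_
      have h0 : ∑ s ∈ T, s = 0 := by simpa using (Finset.mem_filter.1 hT).2
      rw [← Complex.exp_sum, ← map_sum, h0, map_zero, Complex.exp_zero]
  -- integer polynomial
  have hf : ∀ T : Finset A, ∃ f : ℤ[X], f.coeff 0 ≠ 0 ∧ (∑ s ∈ T, s ≠ 0 → aeval (∑ s ∈ T, s) f = 0) := by
    intro T
    by_cases h0 : ∑ s ∈ T, s = 0
    · exact ⟨1, by simp, fun h => (h h0).elim⟩
    · obtain ⟨f, h1, h2⟩ := (halg (∑ s ∈ T, s)).exists_nonzero_coeff_and_aeval_eq_zero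
        (mem_nonZeroDivisors_of_ne_zero h0)
      exact ⟨f, h1, fun _ => h2⟩
  choose F hF0 hF using hf
  set f : ℤ[X] := ∏ T ∈ M, F T with hfdef
  have hf0 : f.eval 0 ≠ 0 := by
    rw [hfdef, eval_prod, Finset.prod_ne_zero_iff]
    intro T _
    rw [← coeff_zero_eq_eval_zero]
    exact hF0 T
  have hfne : f ≠ 0 := by
    rintro h; simp [h] at hf0
  have hroot : ∀ T ∈ M, φ (∑ s ∈ T, s) ∈ f.aroots ℂ := by
    intro T hT
    rw [mem_aroots]
    refine ⟨hfne, ?_⟩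
    have : aeval (∑ s ∈ T, s) f = 0 := by
      rw [hfdef, map_prod]
      exact Finset.prod_eq_zero hT (hF T (Finset.mem_filter.1 hT).2)
    have e := Polynomial.aeval_algHom_apply φ.toIntAlgHom (∑ s ∈ T, s) f
    rw [this, map_zero] at e
    exact e
  -- common denominator
  have hden : ∀ x : A, ∃ a : ℤ, a ≠ 0 ∧ IsIntegral ℤ (a • x) := fun x =>
    (halg x).exists_integral_multiple
  choose b hb0 hb using hden
  set a : ℤ := ∏ T ∈ S.powerset, b (∑ s ∈ T, s) with hadef
  have ha0 : a ≠ 0 := Finset.prod_ne_zero_iff.2 fun T _ => hb0 _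
  have ha : ∀ T ∈ S.powerset, IsIntegral ℤ (a • ∑ s ∈ T, s) := by
    intro T hT
    rw [hadef, ← Finset.prod_erase_mul _ _ hT, mul_smul]
    exact (hb _).smul _
  obtain ⟨c, hc⟩ := LindemannWeierstrass.exp_polynomial_approx f hf0
  set D := f.natDegree with hD
  set C : ℝ := |(a : ℝ)| ^ D * |c| with hC
  have hlim : Filter.Tendsto (fun n : ℕ => (M.card : ℝ) * C * (C ^ n / (n.factorial : ℝ)))
      Filter.atTop (nhds 0) := by
    simpa using (FloorSemiring.tendsto_pow_div_factorial_atTop C).const_mul ((M.card : ℝ) * C)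
  obtain ⟨n₀, hn₀⟩ := Filter.eventually_atTop.1 (hlim.eventually (gt_mem_nhds one_pos))
  obtain ⟨p, hp, hpp⟩ := Nat.exists_infinite_primes
    (n₀ + 1 + ((eval 0 f).natAbs + 1) + (a.natAbs + 1) + (N + 1))
  obtain ⟨n, hpn, g, hg, happ⟩ := hc p (by omega) hpp
  obtain ⟨k, hk⟩ := aux_int S hS a ha g (p * D) (hg.trans (Nat.sub_le _ _))
  -- the integer
  set I : ℤ := a ^ (p * D) * n * N + p * k with hI
  have hI0 : I ≠ 0 := by
    intro h0
    have hpi : Prime (p : ℤ) := Nat.prime_iff_prime_int.1 hpp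
    have hdvd : (p : ℤ) ∣ a ^ (p * D) * n * N := by
      refine ⟨-k, ?_⟩
      linarith
    rcases hpi.dvd_or_dvd hdvd with h1 | h1
    · rcases hpi.dvd_or_dvd h1 with h2 | h2
      · have h3 := Int.natAbs_dvd_natAbs.2 (hpi.dvd_of_dvd_pow h2)
        have := Nat.le_of_dvd (Int.natAbs_pos.2 ha0) h3
        simp at this
        omega
      · exact hpn h2
    · have := Nat.le_of_dvd hNpos (Int.natCast_dvd_natCast.1 h1)
      omega
  have hI1 : (1 : ℝ) ≤ ‖(I : ℂ)‖ := by
    rw [Complex.norm_intCast]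
    exact_mod_cast Int.one_le_abs hI0
  have hkC : (k : ℂ) = (a : ℂ) ^ (p * D) * ∑ T ∈ M, aeval (φ (∑ s ∈ T, s)) g := by
    have := congrArg φ hk
    rw [map_intCast, map_mul, map_pow, map_intCast, map_sum] at this
    rw [this]
    congr 1
    refine Finset.sum_congr rfl fun T _ => ?_
    exact (Polynomial.aeval_algHom_apply φ.toIntAlgHom (∑ s ∈ T, s) g).symm
  have hIeq : (I : ℂ) = -((a : ℂ) ^ (p * D) * ∑ T ∈ M,
      (n • Complex.exp (φ (∑ s ∈ T, s)) - p • aeval (φ (∑ s ∈ T, s)) g)) := by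
    rw [Finset.sum_sub_distrib, ← Finset.smul_sum, ← Finset.smul_sum,
      eq_neg_of_add_eq_zero_left hexp, hI]
    push_cast
    rw [hkC, zsmul_eq_mul, nsmul_eq_mul]
    ring
  have hbd : ‖(I : ℂ)‖ ≤ (M.card : ℝ) * C * (C ^ (p - 1) / ((p - 1).factorial : ℝ)) := by
    rw [hIeq, norm_neg, norm_mul, norm_pow, Complex.norm_intCast]
    have h1 : ‖∑ T ∈ M, (n • Complex.exp (φ (∑ s ∈ T, s)) - p • aeval (φ (∑ s ∈ T, s)) g)‖
        ≤ M.card * (|c| ^ p / ((p - 1).factorial : ℝ)) := by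
      rw [← nsmul_eq_mul]
      rw [← Finset.sum_const]
      refine norm_sum_le_of_le _ fun T hT => (happ (hroot T hT)).trans ?_
      refine div_le_div_of_nonneg_right ?_ (Nat.cast_nonneg _)
      rw [← abs_pow]
      exact le_abs_self _
    have h2 : C * C ^ (p - 1) = C ^ p := by
      rw [← pow_succ', Nat.sub_add_cancel hpp.one_le]
    calc _ ≤ |(a : ℝ)| ^ (p * D) * (M.card * (|c| ^ p / ((p - 1).factorial : ℝ))) := by gcongr
      _ = M.card * (C ^ p / ((p - 1).factorial : ℝ)) := by
        rw [hC, mul_pow, ← pow_mul, mul_comm D p]; ring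
      _ = _ := by rw [← h2]; ring
  have := hn₀ (p - 1) (by omega)
  linarith

open Polynomial in
theorem aux_pi_I' {A : Type} [Field A] [Algebra ℚ A] (hA : IsAlgClosure ℚ A) :
    Transcendental ℚ ((Real.pi : ℂ) * Complex.I) := by
  classical
  have : IsAlgClosed A := hA.isAlgClosed
  have : Algebra.IsAlgebraic ℚ A := hA.isAlgebraic
  have : CharZero A := algebraRat.charZero A
  have : Normal ℚ A := normal_iff.2 fun x =>
    ⟨(Algebra.IsAlgebraic.isAlgebraic x).isIntegral, IsAlgClosed.splits _⟩
  have : IsGalois ℚ A := IsGalois.mk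
  intro halg
  obtain ⟨m, hm0, hm⟩ := halg
  let φ : A →ₐ[ℚ] ℂ := IsAlgClosed.lift
  have hspl : (m.map (algebraMap ℚ A)).Splits := IsAlgClosed.splits _
  obtain ⟨θ, hθ, hφ⟩ : ∃ θ ∈ (m.aroots A), φ θ = (Real.pi : ℂ) * Complex.I := by
    have h1 : m.aroots ℂ = (m.aroots A).map φ := by
      have := hspl.roots_map (φ : A →+* ℂ)
      rw [Polynomial.map_map] at this
      rw [φ.comp_algebraMap] at this
      exact this
    have h2 : (Real.pi : ℂ) * Complex.I ∈ m.aroots ℂ := mem_aroots.2 ⟨hm0, hm⟩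
    rw [h1] at h2
    exact Multiset.mem_map.1 h2
  refine aux_core (A := A) (φ : A →+* ℂ) (m.aroots A).toFinset ?_ ?_
  · intro σ s hs
    rw [Multiset.mem_toFinset, mem_aroots] at hs ⊢
    refine ⟨hm0, ?_⟩
    have := Polynomial.aeval_algHom_apply (σ : A →ₐ[ℚ] A) s m
    rw [hs.2, map_zero] at this
    exact this
  · refine Finset.prod_eq_zero (Multiset.mem_toFinset.2 hθ) ?_
    have : (φ : A →+* ℂ) θ = Real.pi * Complex.I := hφ
    rw [this, Complex.exp_pi_mul_I]
    simp

theorem aux_pi_I : Transcendental ℚ ((Real.pi : ℂ) * Complex.I) :=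
  aux_pi_I' (algebraicClosure.isAlgClosure ℚ ℂ)

theorem aux_pi : Transcendental ℚ Real.pi := by
  intro h
  refine aux_pi_I ?_
  have h1 : IsAlgebraic ℚ (Real.pi : ℂ) := h.algebraMap (A := ℂ)
  have h2 : IsAlgebraic ℚ Complex.I :=
    ⟨Polynomial.X ^ 2 + 1, (Polynomial.monic_X_pow_add (by simp)).ne_zero, by simp⟩
  exact h1.mul h2

theorem aux_tower {n : ℕ} (T : QuadraticTower n) (i : Fin (n + 1)) :
    ∀ x ∈ T.K i, IsAlgebraic ℚ x := by
  induction i using Fin.induction with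
  | zero =>
    intro x hx
    rw [T.bot, IntermediateField.mem_bot] at hx
    obtain ⟨q, rfl⟩ := hx
    exact isAlgebraic_algebraMap q
  | succ i ih =>
    intro x hx
    have hfin : FiniteDimensional (T.K i.castSucc) (IntermediateField.extendScalars (T.le i)) :=
      Module.finite_of_finrank_pos (by rw [T.deg i]; norm_num)
    have halg : Algebra.IsAlgebraic ℚ (T.K i.castSucc) :=
      ⟨fun y => IntermediateField.isAlgebraic_iff.2 (ih y y.2)⟩
    have h1 : IsAlgebraic (T.K i.castSucc)
        (⟨x, hx⟩ : IntermediateField.extendScalars (T.le i)) := Algebra.IsAlgebraic.isAlgebraic _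
    have h2 : IsAlgebraic (T.K i.castSucc) x := IntermediateField.isAlgebraic_iff.1 h1
    exact h2.restrictScalars ℚ

/-- `π` is transcendental over `ℚ`; consequently `π` lies in no subfield of `ℝ`
that is finite-dimensional over `ℚ`, and in particular in no quadratic tower.
Hence squaring the circle by ruler and compass is impossible. -/
theorem pi_transcendental_not_constructible :
    Transcendental ℚ Real.pi ∧
      (∀ K : IntermediateField ℚ ℝ, FiniteDimensional ℚ K → Real.pi ∉ K) ∧
      ¬ ∃ (n : ℕ) (T : QuadraticTower n), Real.pi ∈ T.K (Fin.last n) := by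
  refine ⟨aux_pi, ?_, ?_⟩
  · intro K hK hpi
    have h1 : IsAlgebraic ℚ (⟨Real.pi, hpi⟩ : K) := Algebra.IsAlgebraic.isAlgebraic _
    exact aux_pi (IntermediateField.isAlgebraic_iff.1 h1)
  · rintro ⟨n, T, hT⟩
    exact aux_pi (aux_tower T _ _ hT)
end
end

section
/- The real number log 2 (the natural logarithm of 2) is transcendental over ℚ; in particular log 2 is not algebraic over ℚ and lies in no finite-degree subfield extension of ℚ inside ℝ. -/
noncomputable section

open Polynomial in
lemma aux_integral {K : Type*} [Field K] (a : ℤ) (b : K) (hab : IsIntegral ℤ ((a : K) * b))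
    (g : ℤ[X]) (M : ℕ) (hM : g.natDegree ≤ M) : IsIntegral ℤ ((a : K) ^ M * aeval b g) := by
  rw [aeval_eq_sum_range, Finset.mul_sum]
  refine IsIntegral.sum _ fun i hi => ?_
  have hi' : i ≤ M := by
    have := Finset.mem_range.1 hi
    omega
  have : (a : K) ^ M * (g.coeff i • b ^ i)
      = algebraMap ℤ K (g.coeff i * a ^ (M - i)) * ((a : K) * b) ^ i := by
    conv_lhs => rw [← Nat.sub_add_cancel hi']
    simp [pow_add, mul_pow]
    ring
  rw [this]
  exact isIntegral_algebraMap.mul (hab.pow i)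

lemma aux_prime (A x : ℝ) (B : ℕ) : ∃ p : ℕ, p.Prime ∧ B < p ∧
    A * (x ^ p / (Nat.factorial (p - 1) : ℝ)) < 1 := by
  have h := (FloorSemiring.tendsto_pow_div_factorial_atTop x).const_mul (A * x)
  rw [mul_zero] at h
  obtain ⟨N, hN⟩ := Filter.eventually_atTop.1 (h.eventually (gt_mem_nhds (zero_lt_one)))
  obtain ⟨p, hp, hpp⟩ := Nat.exists_infinite_primes (N + B + 1)
  refine ⟨p, hpp, by omega, ?_⟩
  have := hN (p - 1) (by omega)
  have e : x ^ p = x * x ^ (p - 1) := by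
    rw [← pow_succ', Nat.sub_add_cancel hpp.one_le]
  rw [e]
  calc _ = A * x * (x ^ (p - 1) / (Nat.factorial (p - 1) : ℝ)) := by ring
    _ < 1 := this

open Polynomial in
lemma aux_core_s18 {K : Type*} [Field K] [NumberField K] [IsGalois ℚ K] (φ : K →+* ℂ)
    {I : Type*} [Fintype I] (β : I → K) (m : I → ℤ)
    (hperm : ∀ τ : K ≃ₐ[ℚ] K, ∃ e : I ≃ I, ∀ i, β (e i) = τ (β i) ∧ m (e i) = m i)
    (hsum : ∑ i, (m i : ℂ) * Complex.exp (φ (β i)) = 0)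
    (k : ℤ) (hk : k ≠ 0) (J : Finset I) (hJ : ∀ i, i ∈ J ↔ β i ≠ 0)
    (hkJ : k = ∑ i, m i - ∑ i ∈ J, m i) : False := by
  classical
  have h1 : ∀ i, ∃ f : ℤ[X], β i ≠ 0 → f.coeff 0 ≠ 0 ∧ aeval (β i) f = 0 := by
    intro i
    by_cases hi : β i = 0
    · exact ⟨0, fun h => (h hi).elim⟩
    · have halg : IsAlgebraic ℤ (β i) :=
        (IsFractionRing.isAlgebraic_iff ℤ ℚ K).2 (Algebra.IsAlgebraic.isAlgebraic (β i))
      obtain ⟨f, hf⟩ := halg.exists_nonzero_coeff_and_aeval_eq_zero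
        (mem_nonZeroDivisors_of_ne_zero hi)
      exact ⟨f, fun _ => hf⟩
  choose F hF using h1
  set f : ℤ[X] := ∏ i ∈ J, F i with hf
  have hf0 : f.eval 0 ≠ 0 := by
    rw [hf, eval_prod, Finset.prod_ne_zero_iff]
    intro i hi
    rw [← coeff_zero_eq_eval_zero]
    exact (hF i ((hJ i).1 hi)).1
  have hfne : f ≠ 0 := by
    intro h
    simp [h] at hf0
  have hroot : ∀ i ∈ J, φ (β i) ∈ f.aroots ℂ := by
    intro i hi
    rw [mem_aroots]
    refine ⟨hfne, ?_⟩
    rw [hf, map_prod]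
    refine Finset.prod_eq_zero hi ?_
    have := (hF i ((hJ i).1 hi)).2
    have h2 : aeval (φ (β i)) (F i) = φ (aeval (β i) (F i)) :=
      aeval_algHom_apply (φ.toIntAlgHom) (β i) (F i)
    rw [h2, this, map_zero]
  obtain ⟨c, hc⟩ := LindemannWeierstrass.exp_polynomial_approx f hf0
  obtain ⟨a, ha0, ha⟩ := exists_integral_multiples ℤ ℚ (Finset.univ.image β)
  have hai : ∀ i, IsIntegral ℤ ((a : K) * β i) := by
    intro i
    have := ha (β i) (Finset.mem_image_of_mem _ (Finset.mem_univ i))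
    rwa [zsmul_eq_mul] at this
  set D := f.natDegree
  obtain ⟨p, hp, hpB, hpA⟩ := aux_prime (∑ i ∈ J, |(m i : ℝ)|) (|(a : ℝ)| ^ D * c)
    ((eval 0 f).natAbs + k.natAbs + a.natAbs)
  obtain ⟨n, hn, g, hg, hbound⟩ := hc p (by omega) hp
  -- the rational number
  set z : K := ∑ i ∈ J, (m i : K) * aeval (β i) g with hz
  have hzfix : ∀ τ : K ≃ₐ[ℚ] K, τ z = z := by
    intro τ
    obtain ⟨e, he⟩ := hperm τ
    rw [hz, map_sum]
    refine Finset.sum_equiv e ?_ ?_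
    · intro i
      rw [hJ, hJ, (he i).1]
      simp
    · intro i hi
      rw [(he i).1, (he i).2, map_mul, map_intCast]
      congr 1
      exact (aeval_algHom_apply ((τ : K →ₐ[ℚ] K).restrictScalars ℤ) (β i) g).symm
  have hzQ : ∃ q : ℚ, algebraMap ℚ K q = z := by
    have := (IsGalois.mem_bot_iff_fixed (F := ℚ) (E := K) z).2 hzfix
    exact IntermediateField.mem_bot.1 this
  obtain ⟨q, hq⟩ := hzQ
  have hzint : IsIntegral ℤ ((a : K) ^ (p * D) * z) := by
    rw [hz, Finset.mul_sum]
    refine IsIntegral.sum _ fun i hi => ?_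
    have := aux_integral a (β i) (hai i) g (p * D) (by omega)
    have e : (a : K) ^ (p * D) * ((m i : K) * aeval (β i) g)
        = algebraMap ℤ K (m i) * ((a : K) ^ (p * D) * aeval (β i) g) := by
      simp
      ring
    rw [e]
    exact isIntegral_algebraMap.mul this
  have hy : ∃ y : ℤ, (y : K) = (a : K) ^ (p * D) * z := by
    have e : (a : K) ^ (p * D) * z = algebraMap ℚ K ((a : ℚ) ^ (p * D) * q) := by
      simp [← hq]
    rw [e] at hzint ⊢
    rw [isIntegral_algebraMap_iff (algebraMap ℚ K).injective] at hzint
    obtain ⟨y, hy⟩ := IsIntegrallyClosed.isIntegral_iff.1 hzint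
    refine ⟨y, ?_⟩
    rw [← hy]
    simp
  obtain ⟨y, hy⟩ := hy
  set E : ℤ := a ^ (p * D) * (k * n) + p * y with hE
  have hyC : (y : ℂ) = (a : ℂ) ^ (p * D) * ∑ i ∈ J, (m i : ℂ) * aeval (φ (β i)) g := by
    have := congrArg φ hy
    rw [map_intCast, map_mul, map_pow, map_intCast, hz, map_sum] at this
    rw [this]
    congr 1
    refine Finset.sum_congr rfl fun i _ => ?_
    rw [map_mul, map_intCast]
    congr 1
    exact (aeval_algHom_apply (φ.toIntAlgHom) (β i) g).symm
  have hkC : (k : ℂ) = - ∑ i ∈ J, (m i : ℂ) * Complex.exp (φ (β i)) := by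
    rw [← Finset.sum_add_sum_compl J] at hsum
    have : ∑ i ∈ Jᶜ, (m i : ℂ) * Complex.exp (φ (β i)) = (k : ℂ) := by
      rw [hkJ, ← Finset.sum_add_sum_compl J]
      push_cast
      rw [add_sub_cancel_left]
      refine Finset.sum_congr rfl fun i hi => ?_
      have : β i = 0 := by
        rw [Finset.mem_compl, hJ] at hi
        simpa using hi
      simp [this]
    rw [this] at hsum
    linear_combination hsum
  have hEC : (E : ℂ) = -((a : ℂ) ^ (p * D) *
      ∑ i ∈ J, (m i : ℂ) * (n • Complex.exp (φ (β i)) - p • aeval (φ (β i)) g)) := by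
    rw [hE]
    push_cast
    rw [hyC, hkC]
    simp only [mul_sub, Finset.sum_sub_distrib, zsmul_eq_mul, nsmul_eq_mul]
    have e1 : ∑ i ∈ J, (m i : ℂ) * ((n : ℂ) * Complex.exp (φ (β i)))
        = n * ∑ i ∈ J, (m i : ℂ) * Complex.exp (φ (β i)) := by
      rw [Finset.mul_sum]
      exact Finset.sum_congr rfl fun i _ => by ring
    have e2 : ∑ i ∈ J, (m i : ℂ) * ((p : ℂ) * aeval (φ (β i)) g)
        = p * ∑ i ∈ J, (m i : ℂ) * aeval (φ (β i)) g := by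
      rw [Finset.mul_sum]
      exact Finset.sum_congr rfl fun i _ => by ring
    rw [e1, e2]
    ring
  have hnorm : ‖(E : ℂ)‖ < 1 := by
    refine lt_of_le_of_lt ?_ hpA
    rw [hEC, norm_neg, norm_mul, norm_pow]
    have e1 : ‖(a : ℂ)‖ = |(a : ℝ)| := by simp
    rw [e1, mul_pow, ← pow_mul, mul_comm D p]
    have : ‖∑ i ∈ J, (m i : ℂ) * (n • Complex.exp (φ (β i)) - p • aeval (φ (β i)) g)‖
        ≤ ∑ i ∈ J, |(m i : ℝ)| * (c ^ p / (Nat.factorial (p - 1) : ℝ)) := by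
      refine norm_sum_le_of_le _ fun i hi => ?_
      rw [norm_mul]
      have e2 : ‖(m i : ℂ)‖ = |(m i : ℝ)| := by simp
      rw [e2]
      exact mul_le_mul_of_nonneg_left (hbound (hroot i hi)) (abs_nonneg _)
    calc _ ≤ |(a : ℝ)| ^ (p * D) * ∑ i ∈ J, |(m i : ℝ)| * (c ^ p / (Nat.factorial (p - 1) : ℝ)) :=
          mul_le_mul_of_nonneg_left this (by positivity)
      _ = _ := by
        rw [← Finset.sum_mul]
        ring
  have hE0 : E = 0 := by
    rw [Complex.norm_intCast] at hnorm
    have : |E| < 1 := by exact_mod_cast hnorm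
    exact Int.abs_lt_one_iff.1 this
  have hdvd : (p : ℤ) ∣ a ^ (p * D) * (k * n) := ⟨-y, by linear_combination hE0 - hE⟩
  have hpZ : Prime (p : ℤ) := Nat.prime_iff_prime_int.1 hp
  have small : ∀ b : ℤ, b ≠ 0 → b.natAbs < p → ¬ (p : ℤ) ∣ b := by
    intro b hb hbp hd
    exact absurd (Nat.le_of_dvd (Int.natAbs_pos.2 hb) (Int.natCast_dvd.1 hd)) (by omega)
  rcases hpZ.dvd_or_dvd hdvd with h | h
  · exact small a ha0 (by omega) (hpZ.dvd_of_dvd_pow h)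
  · rcases hpZ.dvd_or_dvd h with h | h
    · exact small k hk (by omega) h
    · exact hn h

open Polynomial in
lemma aux_galois {K : Type*} [Field K] [NumberField K] [IsGalois ℚ K] (φ : K →+* ℂ)
    (α : K) (hα : Complex.exp (φ α) = 2) : False := by
  classical
  let G := K ≃ₐ[ℚ] K
  let b : Finset G → K := fun S => ∑ σ ∈ S, σ α
  -- choose a multiple for which the constant term does not vanish
  let W : Finset (Finset G) := Finset.univ.filter fun S => b S = 0
  let Q : ℤ[X] := ∑ S ∈ W, C ((-1) ^ S.card) * X ^ (Fintype.card G - S.card)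
  have hcard : ∀ S : Finset G, S.card ≤ Fintype.card G := fun S => S.card_le_univ
  have hQ : Q ≠ 0 := by
    intro h
    have h2 : Q.coeff (Fintype.card G) = 1 := by
      simp only [Q, finsetSum_coeff, coeff_C_mul, coeff_X_pow]
      rw [Finset.sum_eq_single ∅]
      · simp
      · intro S _ hS
        have := Finset.card_pos.2 (Finset.nonempty_iff_ne_empty.2 hS)
        have h3 := hcard S
        rw [if_neg (by omega), mul_zero]
      · intro h
        exact absurd (by simp [W, b]) h
    rw [h] at h2
    simp at h2
  have hN : ∃ N : ℕ, Q.eval ((2 : ℤ) ^ (N + 1)) ≠ 0 := by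
    by_contra! hcon
    apply hQ
    refine Polynomial.eq_zero_of_infinite_isRoot Q ?_
    refine Set.Infinite.mono (s := Set.range fun N : ℕ => (2 : ℤ) ^ (N + 1)) ?_ ?_
    · rintro _ ⟨N, rfl⟩
      exact hcon N
    · refine Set.infinite_range_of_injective fun x y hxy => ?_
      have := Int.pow_right_injective (a := 2) (by norm_num) hxy
      omega
  obtain ⟨N, hN⟩ := hN
  set T : ℤ := 2 ^ (N + 1) with hT
  let m : Finset G → ℤ := fun S => (-1) ^ S.card * T ^ (Fintype.card G - S.card)
  have hN0 : ((N + 1 : ℕ) : K) ≠ 0 := Nat.cast_ne_zero.2 (Nat.succ_ne_zero N)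
  refine aux_core_s18 φ (fun S : Finset G => ((N + 1 : ℕ) : K) * b S) m ?_ ?_
    (Q.eval T) hN Wᶜ ?_ ?_
  · intro τ
    refine ⟨(Equiv.mulLeft τ).finsetCongr, fun S => ⟨?_, ?_⟩⟩
    · simp [b, map_sum]
      exact Or.inl rfl
    · simp [m]
  · have hprod : ∏ σ : G, ((T : ℂ) - Complex.exp (φ (((N + 1 : ℕ) : K) * σ α))) = 0 := by
      refine Finset.prod_eq_zero (Finset.mem_univ (1 : G)) ?_
      rw [map_mul, map_natCast, Complex.exp_nat_mul]
      change (T : ℂ) - Complex.exp (φ α) ^ (N + 1) = 0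
      simp [hα, hT]
    simp only [sub_eq_neg_add] at hprod
    rw [Finset.prod_add] at hprod
    rw [← hprod, Finset.powerset_univ]
    refine Finset.sum_congr rfl fun S _ => ?_
    rw [Finset.prod_const, Finset.prod_neg, ← Complex.exp_sum, ← map_sum, ← Finset.mul_sum,
      Finset.card_univ_sdiff]
    simp only [m, b]
    push_cast
    ring
  · intro S
    have : (N : K) + 1 ≠ 0 := by exact_mod_cast hN0
    simp [W, this]
  · rw [← Finset.sum_add_sum_compl W, add_sub_cancel_right]
    simp [Q, m, eval_finsetSum]

lemma aux_transc : Transcendental ℚ (Real.log 2) := by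
  intro halg
  have hC : IsAlgebraic ℚ ((Real.log 2 : ℝ) : ℂ) := halg.algebraMap (A := ℂ)
  set α : ℂ := ((Real.log 2 : ℝ) : ℂ) with hα
  let f := minpoly ℚ α
  let K : IntermediateField ℚ ℂ := IntermediateField.adjoin ℚ (f.rootSet ℂ)
  have : f.IsSplittingField ℚ K :=
    IntermediateField.adjoin_rootSet_isSplittingField (IsAlgClosed.splits _)
  have : FiniteDimensional ℚ K := Polynomial.IsSplittingField.finiteDimensional K f
  have : Normal ℚ K := Normal.of_isSplittingField f
  have : NumberField K := ⟨⟩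
  have : IsGalois ℚ K := ⟨⟩
  have hmem : α ∈ K := by
    apply IntermediateField.subset_adjoin
    rw [Polynomial.mem_rootSet]
    exact ⟨minpoly.ne_zero hC.isIntegral, minpoly.aeval ℚ α⟩
  refine aux_galois (K := K) (algebraMap K ℂ) ⟨α, hmem⟩ ?_
  change Complex.exp α = 2
  rw [hα, ← Complex.ofReal_exp, Real.exp_log (by norm_num)]
  norm_num

/-- `log 2` is transcendental over `ℚ`; in particular it is not algebraic over `ℚ`
and lies in no finite-degree subfield extension of `ℚ` inside `ℝ`. -/
theorem log_two_transcendental :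
    Transcendental ℚ (Real.log 2) ∧
      ¬ IsAlgebraic ℚ (Real.log 2) ∧
      ∀ K : IntermediateField ℚ ℝ, FiniteDimensional ℚ K → Real.log 2 ∉ K := by
  refine ⟨aux_transc, aux_transc, fun K hK hmem => aux_transc ?_⟩
  have h : IsAlgebraic ℚ (⟨Real.log 2, hmem⟩ : K) := Algebra.IsAlgebraic.isAlgebraic _
  exact h.algebraMap (A := ℝ)
end
end
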